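/- arXiv:1102.1910 — 7 statements merged into one kernel-verified Lean document; each statement's English description precedes it below -/
import Mathlib

section
/- Let n ≥ 1, let X ⊂ ℝ^n be a nonempty compact set and let f : X → X be a continuous map with modulus of continuity ω. Suppose there exist an integer m ≥ 2 and δ > 0 such that f has the (m,δ)-separated preimage property on X. Let h : (0,η] → (0,∞) be a gauge function, and suppose that for all sufficiently large k ∈ ℕ there exists t_k ∈ (0,η] with h(t_k) = 1/m^k and ω^k(t_k) ≤ δ/2, where ω^k denotes the k-fold iterate of ω. Then the generalized Hausdorff measure satisfies H_h(X) > 0. -/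
open MeasureTheory Metric Set Filter

/-!
Choose `m` inverse branches `g i` of `f` whose values are `δ`-separated, and let `P` average a
function over the branches. If all forward iterates up to time `k` keep the points of `U` within
distance less than `δ`, then at each step back at most one branch can lead into `U`, so
`P ^ k 1_U ≤ m⁻ᵏ`. As `P` fixes constants, a finite cover of `X` by such sets `U j`, with times
`k j`, satisfies `1 ≤ ∑ m⁻ᵏʲ`. The modulus of continuity shows that a set of diameter at most `t_k`
is such a set `U`, and monotonicity of the gauge rounds the diameters of an arbitrary cover up to
the scales `t_k` at the cost of a factor `m`; compactness makes the cover finite.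
-/

section

open Dynamics Function
open scoped ENNReal Topology

section BranchAverage

variable {α ι : Type*} [Fintype ι]

/-- The averaging operator `φ ↦ (y ↦ (1 / card ι) ∑ i, φ (g i y))` of a finite family of maps `g`.
When the `g i` are inverse branches of a map, this is its normalized transfer operator. It acts on
`ℝ≥0∞`-valued functions so that neither measurability nor boundedness has to be tracked. -/
noncomputable def branchAverage (g : ι → α → α) : Module.End ℝ≥0∞ (α → ℝ≥0∞) :=
  (Fintype.card ι : ℝ≥0∞)⁻¹ • ∑ i, LinearMap.funLeft ℝ≥0∞ ℝ≥0∞ (g i)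

lemma branchAverage_apply (g : ι → α → α) (φ : α → ℝ≥0∞) (y : α) :
    branchAverage g φ y = (Fintype.card ι : ℝ≥0∞)⁻¹ * ∑ i, φ (g i y) := by
  simp [branchAverage, LinearMap.funLeft_apply]

lemma branchAverage_pow_succ_apply (g : ι → α → α) (n : ℕ) (φ : α → ℝ≥0∞) (y : α) :
    (branchAverage g ^ (n + 1)) φ y =
      (Fintype.card ι : ℝ≥0∞)⁻¹ * ∑ i, (branchAverage g ^ n) φ (g i y) := by
  rw [pow_succ', Module.End.mul_apply, branchAverage_apply]

lemma monotone_branchAverage_pow (g : ι → α → α) (n : ℕ) : Monotone (branchAverage g ^ n) := by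
  have monotone_branchAverage : Monotone (branchAverage g) := fun φ ψ hφψ y => by
    simp only [branchAverage_apply]
    gcongr
    exact hφψ _
  rw [Module.End.coe_pow]
  exact monotone_branchAverage.iterate n

lemma branchAverage_pow_const [Nonempty ι] (g : ι → α → α) (n : ℕ) (c : ℝ≥0∞) :
    (branchAverage g ^ n) (fun _ => c) = fun _ => c := by
  induction n with
  | zero => simp
  | succ n ih =>
    funext y
    simp only [branchAverage_pow_succ_apply, ih, Finset.sum_const, Finset.card_univ, nsmul_eq_mul]
    rw [← mul_assoc, ENNReal.inv_mul_cancel (by simp) (by simp), one_mul]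

lemma sum_le_of_subsingleton_support {a : ι → ℝ≥0∞} {c : ℝ≥0∞} (ha : (support a).Subsingleton)
    (hac : ∀ i, a i ≤ c) : ∑ i, a i ≤ c := by
  rcases ha.eq_empty_or_singleton with hempty | ⟨i, hi⟩
  · simp [support_eq_empty_iff.mp hempty]
  · have hzero : ∀ j ≠ i, a j = 0 := fun j hj => by
      rwa [← notMem_support, hi, mem_singleton_iff]
    rw [Fintype.sum_eq_single i hzero]
    exact hac i

variable {f : α → α} {g : ι → α → α}

lemma support_branchAverage_pow_subset (hg : ∀ i, RightInverse (g i) f) (n : ℕ) (φ : α → ℝ≥0∞) :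
    support ((branchAverage g ^ n) φ) ⊆ f^[n] '' support φ := by
  induction n with
  | zero => simp
  | succ n ih =>
    intro y hy
    rw [mem_support, branchAverage_pow_succ_apply] at hy
    obtain ⟨i, -, hi⟩ := Finset.exists_ne_zero_of_sum_ne_zero (right_ne_zero_of_mul hy)
    obtain ⟨x, hx, hxy⟩ := ih hi
    exact ⟨x, hx, by rw [iterate_succ_apply', hxy, hg i y]⟩

variable {V : SetRel α α}

lemma branchAverage_pow_indicator_le (hg : ∀ i, RightInverse (g i) f)
    (hsep : ∀ y, Pairwise fun i j => (g i y, g j y) ∉ V) {U : Set α} {k : ℕ}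
    (hU : U ×ˢ U ⊆ dynEntourage f V k) (y : α) :
    (branchAverage g ^ k) (U.indicator 1) y ≤ (Fintype.card ι : ℝ≥0∞)⁻¹ ^ k := by
  induction k generalizing y with
  | zero =>
    rw [pow_zero, pow_zero, Module.End.one_apply]
    exact indicator_le_self U (1 : α → ℝ≥0∞) y
  | succ k ih =>
    have subset_image : support ((branchAverage g ^ k) (U.indicator 1)) ⊆ f^[k] '' U :=
      (support_branchAverage_pow_subset hg k _).trans (image_mono support_indicator_subset)
    have subsingleton_support :
        (support fun i => (branchAverage g ^ k) (U.indicator 1) (g i y)).Subsingleton := by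
      intro i hi j hj
      obtain ⟨x, hxU, hx⟩ := subset_image hi
      obtain ⟨x', hxU', hx'⟩ := subset_image hj
      by_contra hij
      refine hsep y hij ?_
      rw [← hx, ← hx']
      exact mem_dynEntourage.mp (hU (mk_mem_prod hxU hxU')) k k.lt_succ_self
    rw [branchAverage_pow_succ_apply, pow_succ']
    gcongr
    exact sum_le_of_subsingleton_support subsingleton_support fun i =>
      ih (hU.trans (dynEntourage_antitone f V k.le_succ)) (g i y)

theorem one_le_sum_inv_card_pow_of_cover [Nonempty α] [Nonempty ι]
    (hg : ∀ i, RightInverse (g i) f) (hsep : ∀ y, Pairwise fun i j => (g i y, g j y) ∉ V)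
    {κ : Type*} {J : Finset κ} {U : κ → Set α} {k : κ → ℕ}
    (hU : ∀ j ∈ J, U j ×ˢ U j ⊆ dynEntourage f V (k j)) (hcover : ⋃ j ∈ J, U j = univ) :
    1 ≤ ∑ j ∈ J, (Fintype.card ι : ℝ≥0∞)⁻¹ ^ k j := by
  obtain ⟨y⟩ := ‹Nonempty α›
  set P := branchAverage g
  obtain ⟨N, hN⟩ : ∃ N, ∀ j ∈ J, k j ≤ N := ⟨J.sup k, fun j => Finset.le_sup⟩
  have one_le_sum_indicator : (fun _ => 1) ≤ ∑ j ∈ J, (U j).indicator (1 : α → ℝ≥0∞) := by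
    intro x
    obtain ⟨j, hj, hxj⟩ := mem_iUnion₂.mp (hcover ▸ mem_univ x)
    calc 1 = (U j).indicator (1 : α → ℝ≥0∞) x := by simp [hxj]
      _ ≤ ∑ j ∈ J, (U j).indicator (1 : α → ℝ≥0∞) x :=
        Finset.single_le_sum (f := fun j => (U j).indicator (1 : α → ℝ≥0∞) x)
          (fun _ _ => zero_le) hj
      _ = (∑ j ∈ J, (U j).indicator (1 : α → ℝ≥0∞)) x := (Finset.sum_apply ..).symm
  have pow_indicator_le : ∀ j ∈ J,
      (P ^ N) ((U j).indicator 1) y ≤ (Fintype.card ι : ℝ≥0∞)⁻¹ ^ k j := by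
    intro j hj
    rw [← Nat.sub_add_cancel (hN j hj), pow_add, Module.End.mul_apply]
    calc (P ^ (N - k j)) ((P ^ k j) ((U j).indicator 1)) y
        ≤ (P ^ (N - k j)) (fun _ => (Fintype.card ι : ℝ≥0∞)⁻¹ ^ k j) y :=
          monotone_branchAverage_pow g _ (branchAverage_pow_indicator_le hg hsep (hU j hj)) y
      _ = (Fintype.card ι : ℝ≥0∞)⁻¹ ^ k j := by rw [branchAverage_pow_const]
  calc 1 = (P ^ N) (fun _ => 1) y := by rw [branchAverage_pow_const]
    _ ≤ (P ^ N) (∑ j ∈ J, (U j).indicator 1) y :=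
      monotone_branchAverage_pow g N one_le_sum_indicator y
    _ = ∑ j ∈ J, (P ^ N) ((U j).indicator 1) y := by rw [map_sum, Finset.sum_apply]
    _ ≤ ∑ j ∈ J, (Fintype.card ι : ℝ≥0∞)⁻¹ ^ k j := Finset.sum_le_sum pow_indicator_le

end BranchAverage

section Modulus

lemma iterate_le_max_of_monotoneOn {α : Type*} [LinearOrder α] {s : Set α} {F : α → α}
    (hF : MonotoneOn F s) (hFs : MapsTo F s s) {x : α} (hx : x ∈ s) {i k : ℕ} (hik : i ≤ k) :
    F^[i] x ≤ max x (F^[k] x) := by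
  have monotone_restrict : Monotone (hFs.restrict F s s) := fun a b hab => hF a.2 b.2 hab
  have coe_iterate (n : ℕ) : ((hFs.restrict F s s)^[n] ⟨x, hx⟩ : α) = F^[n] x :=
    hFs.coe_iterate_restrict ⟨x, hx⟩ n
  rcases le_total x (F x) with hle | hle
  · refine le_max_of_le_right ?_
    rw [← coe_iterate, ← coe_iterate]
    exact monotone_restrict.monotone_iterate_of_le_map (x := ⟨x, hx⟩) hle hik
  · refine le_max_of_le_left ?_
    rw [← coe_iterate]
    exact monotone_restrict.antitone_iterate_of_map_le (x := ⟨x, hx⟩) hle i.zero_le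

variable {α : Type*} [PseudoMetricSpace α] {f : α → α} {ω : ℝ → ℝ}

lemma dist_iterate_le_iterate_modulus (hω : MonotoneOn ω (Ici 0))
    (hf : ∀ x y, dist (f x) (f y) ≤ ω (dist x y)) {x y : α} {t : ℝ} (hxy : dist x y ≤ t) (n : ℕ) :
    dist (f^[n] x) (f^[n] y) ≤ ω^[n] t := by
  induction n with
  | zero => exact hxy
  | succ n ih =>
    simp only [iterate_succ_apply']
    exact (hf _ _).trans (hω dist_nonneg (dist_nonneg.trans ih) ih)

lemma mem_dynEntourage_of_dist_le (hω : MonotoneOn ω (Ici 0))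
    (hf : ∀ x y, dist (f x) (f y) ≤ ω (dist x y)) {δ t : ℝ} {k : ℕ} (htδ : t < δ)
    (hkδ : ω^[k] t < δ) {x y : α} (hxy : dist x y ≤ t) :
    (x, y) ∈ dynEntourage f {p | dist p.1 p.2 < δ} k := by
  have modulus_nonneg : MapsTo ω (Ici 0) (Ici 0) := fun r hr =>
    calc 0 ≤ dist (f x) (f x) := dist_nonneg
      _ ≤ ω 0 := dist_self x ▸ hf x x
      _ ≤ ω r := hω self_mem_Ici hr hr
  refine mem_dynEntourage.mpr fun i hi => ?_
  calc dist (f^[i] x) (f^[i] y) ≤ ω^[i] t := dist_iterate_le_iterate_modulus hω hf hxy i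
    _ ≤ max t (ω^[k] t) :=
      iterate_le_max_of_monotoneOn hω modulus_nonneg (dist_nonneg.trans hxy) hi.le
    _ < δ := max_lt htδ hkδ

end Modulus

section Gauge

lemma exists_isOpen_superset_ediam_le {E : Type*} [PseudoEMetricSpace E] {A : Set E} {r : ℝ≥0∞}
    (hA : ediam A < r) : ∃ U, IsOpen U ∧ A ⊆ U ∧ ediam U ≤ r := by
  obtain ⟨ε, hε, hAr⟩ := ENNReal.lt_iff_exists_add_pos_lt.mp hA
  refine ⟨thickening (ε / 2 : NNReal) A, isOpen_thickening,
    self_subset_thickening (by positivity) A, (ediam_thickening_le _).trans ?_⟩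
  rw [← ENNReal.coe_ofNat, ← ENNReal.coe_mul, mul_div_cancel₀ ε two_ne_zero]
  exact hAr.le

variable {φ : ℝ≥0∞ → ℝ≥0∞} {η c : ℝ≥0∞} {s : ℕ → ℝ≥0∞}

lemma exists_lt_scale_and_gauge_le (hφ : MonotoneOn φ (Ioc 0 η)) (hφpos : ∀ d ∈ Ioc 0 η, 0 < φ d)
    (hs : ∀ k, s k ∈ Ioc 0 η) (hlim : Tendsto (φ ∘ s) atTop (𝓝 0))
    (hratio : ∀ k, φ (s k) ≤ c * φ (s (k + 1))) {d : ℝ≥0∞} (hd : 0 < d) (hds : d < s 0) :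
    ∃ k, d < s k ∧ φ (s k) ≤ c * φ d := by
  have hdη : d ∈ Ioc 0 η := ⟨hd, hds.le.trans (hs 0).2⟩
  obtain ⟨k, hdk, hkd⟩ : ∃ k, d < s k ∧ s (k + 1) ≤ d := by
    by_contra! hstep
    have d_lt_scale (k : ℕ) : d < s k := Nat.rec hds (fun k => hstep k) k
    have gauge_le : φ d ≤ 0 := ge_of_tendsto' hlim fun k => hφ hdη (hs k) (d_lt_scale k).le
    exact gauge_le.not_gt (hφpos d hdη)
  exact ⟨k, hdk, (hratio k).trans (mul_le_mul_right (hφ (hs (k + 1)) hdη hkd) c)⟩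

lemma exists_isOpen_superset_gauge_le {E : Type*} [PseudoEMetricSpace E]
    (hφ : MonotoneOn φ (Ioc 0 η)) (hφpos : ∀ d ∈ Ioc 0 η, 0 < φ d)
    (hs : ∀ k, s k ∈ Ioc 0 η) (hlim : Tendsto (φ ∘ s) atTop (𝓝 0))
    (hratio : ∀ k, φ (s k) ≤ c * φ (s (k + 1))) {A : Set E} (hA : ediam A < s 0)
    {ε : ℝ≥0∞} (hε : 0 < ε) :
    ∃ k U, IsOpen U ∧ A ⊆ U ∧ ediam U ≤ s k ∧
      φ (s k) ≤ c * (⨆ _ : A.Nonempty, φ (ediam A)) + ε := by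
  obtain ⟨k, hAk, hk⟩ : ∃ k, ediam A < s k ∧
      φ (s k) ≤ c * (⨆ _ : A.Nonempty, φ (ediam A)) + ε := by
    rcases eq_zero_or_pos (a := ediam A) with hzero | hpos
    · obtain ⟨k, hk⟩ := (hlim.eventually_lt_const hε).exists
      exact ⟨k, hzero ▸ (hs k).1, le_add_left hk.le⟩
    · have hne : A.Nonempty := by
        by_contra! hempty
        simp [hempty] at hpos
      obtain ⟨k, hAk, hk⟩ := exists_lt_scale_and_gauge_le hφ hφpos hs hlim hratio hpos hA
      exact ⟨k, hAk, by simpa only [hne, iSup_pos] using le_add_right hk⟩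
  obtain ⟨U, hUopen, hAU, hU⟩ := exists_isOpen_superset_ediam_le hAk
  exact ⟨k, U, hUopen, hAU, hU, hk⟩

theorem inv_le_mkMetric_of_one_le_sum_of_finite_cover {E : Type*} [EMetricSpace E]
    [MeasurableSpace E] [BorelSpace E] {X : Set E} (hX : IsCompact X)
    (hφ : MonotoneOn φ (Ioc 0 η)) (hφpos : ∀ d ∈ Ioc 0 η, 0 < φ d)
    (hs : ∀ k, s k ∈ Ioc 0 η) (hlim : Tendsto (φ ∘ s) atTop (𝓝 0))
    (hratio : ∀ k, φ (s k) ≤ c * φ (s (k + 1)))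
    (hcover : ∀ (J : Finset ℕ) (U : ℕ → Set E) (k : ℕ → ℕ), X ⊆ ⋃ j ∈ J, U j →
      (∀ j ∈ J, ediam (U j) ≤ s (k j)) → 1 ≤ ∑ j ∈ J, φ (s (k j))) :
    c⁻¹ ≤ Measure.mkMetric φ X := by
  obtain ⟨r, hr, hrs⟩ := exists_between (hs 0).1
  rw [Measure.mkMetric_apply]
  refine le_iSup₂_of_le r hr (le_iInf fun A => le_iInf₂ fun hXA hA => ?_)
  rw [← one_div]
  refine ENNReal.div_le_of_le_mul' ?_
  refine ENNReal.le_of_forall_pos_le_add fun ε hε _ => ?_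
  obtain ⟨ε', hε', hsum⟩ := ENNReal.exists_pos_sum_of_countable' (ENNReal.coe_pos.mpr hε).ne' ℕ
  choose k U hUopen hAU hU hUφ using fun j =>
    exists_isOpen_superset_gauge_le hφ hφpos hs hlim hratio ((hA j).trans_lt hrs) (hε' j)
  obtain ⟨J, hJ⟩ := hX.elim_finite_subcover U hUopen (hXA.trans (iUnion_mono hAU))
  calc 1 ≤ ∑ j ∈ J, φ (s (k j)) := hcover J U k hJ fun j _ => hU j
    _ ≤ ∑' j, φ (s (k j)) := ENNReal.sum_le_tsum J
    _ ≤ ∑' j, (c * (⨆ _ : (A j).Nonempty, φ (ediam (A j))) + ε' j) := ENNReal.tsum_le_tsum hUφ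
    _ = c * (∑' j, ⨆ _ : (A j).Nonempty, φ (ediam (A j))) + ∑' j, ε' j := by
      rw [ENNReal.tsum_add, ENNReal.tsum_mul_left]
    _ ≤ c * (∑' j, ⨆ _ : (A j).Nonempty, φ (ediam (A j))) + ε := by gcongr

lemma toReal_mem_Ioc_of_mem_Ioc_ofReal {η : ℝ} {d : ℝ≥0∞} (hd : d ∈ Ioc 0 (ENNReal.ofReal η)) :
    d.toReal ∈ Ioc 0 η := by
  have d_ne_top : d ≠ ∞ := (hd.2.trans_lt ENNReal.ofReal_lt_top).ne
  have η_pos : 0 < η := ENNReal.ofReal_pos.mp (hd.1.trans_le hd.2)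
  exact ⟨ENNReal.toReal_pos hd.1.ne' d_ne_top, ENNReal.toReal_le_of_le_ofReal η_pos.le hd.2⟩

theorem mkMetric_ofReal_pos_of_one_le_sum_of_finite_cover {E : Type*} [EMetricSpace E]
    [MeasurableSpace E] [BorelSpace E] {X : Set E} (hX : IsCompact X) {h : ℝ → ℝ} {η c : ℝ}
    (hmono : MonotoneOn h (Ioc 0 η)) (hpos : ∀ d ∈ Ioc 0 η, 0 < h d) {t : ℕ → ℝ}
    (ht : ∀ k, t k ∈ Ioc 0 η) (hlim : Tendsto (h ∘ t) atTop (𝓝 0))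
    (hratio : ∀ k, h (t k) ≤ c * h (t (k + 1)))
    (hcover : ∀ (J : Finset ℕ) (U : ℕ → Set E) (k : ℕ → ℕ), X ⊆ ⋃ j ∈ J, U j →
      (∀ j ∈ J, ediam (U j) ≤ ENNReal.ofReal (t (k j))) →
      1 ≤ ∑ j ∈ J, ENNReal.ofReal (h (t (k j)))) :
    0 < Measure.mkMetric (fun d => ENNReal.ofReal (h d.toReal)) X := by
  set φ : ℝ≥0∞ → ℝ≥0∞ := fun d => ENNReal.ofReal (h d.toReal)
  have gauge_scale (k : ℕ) : φ (ENNReal.ofReal (t k)) = ENNReal.ofReal (h (t k)) := by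
    simp only [φ, ENNReal.toReal_ofReal (ht k).1.le]
  have monotoneOn_gauge : MonotoneOn φ (Ioc 0 (ENNReal.ofReal η)) := fun d hd d' hd' hdd' =>
    ENNReal.ofReal_le_ofReal <| hmono (toReal_mem_Ioc_of_mem_Ioc_ofReal hd)
      (toReal_mem_Ioc_of_mem_Ioc_ofReal hd')
      (ENNReal.toReal_mono (hd'.2.trans_lt ENNReal.ofReal_lt_top).ne hdd')
  have gauge_pos : ∀ d ∈ Ioc 0 (ENNReal.ofReal η), 0 < φ d := fun d hd =>
    ENNReal.ofReal_pos.mpr (hpos _ (toReal_mem_Ioc_of_mem_Ioc_ofReal hd))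
  have scale_mem (k : ℕ) : ENNReal.ofReal (t k) ∈ Ioc 0 (ENNReal.ofReal η) :=
    ⟨ENNReal.ofReal_pos.mpr (ht k).1, ENNReal.ofReal_le_ofReal (ht k).2⟩
  have tendsto_gauge_scale : Tendsto (φ ∘ fun k => ENNReal.ofReal (t k)) atTop (𝓝 0) := by
    simpa only [comp_def, gauge_scale, ENNReal.ofReal_zero] using ENNReal.tendsto_ofReal hlim
  have gauge_ratio (k : ℕ) : φ (ENNReal.ofReal (t k)) ≤
      ENNReal.ofReal c * φ (ENNReal.ofReal (t (k + 1))) := by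
    rw [gauge_scale, gauge_scale, ← ENNReal.ofReal_mul' (hpos _ (ht (k + 1))).le]
    exact ENNReal.ofReal_le_ofReal (hratio k)
  refine (ENNReal.inv_pos.mpr ENNReal.ofReal_ne_top).trans_le <|
    inv_le_mkMetric_of_one_le_sum_of_finite_cover hX monotoneOn_gauge gauge_pos scale_mem
      tendsto_gauge_scale gauge_ratio ?_
  simpa only [gauge_scale] using hcover

lemma eventually_forall_lt_of_gauge_le {h : ℝ → ℝ} {η δ : ℝ} (hmono : MonotoneOn h (Ioc 0 η))
    (hpos : ∀ t ∈ Ioc 0 η, 0 < h t) (hδ : 0 < δ) :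
    ∀ᶠ r in 𝓝 0, ∀ t ∈ Ioc 0 η, h t ≤ r → t < δ := by
  rcases le_or_gt η 0 with hη | hη
  · simp [Ioc_eq_empty_of_le hη]
  · have hmem : min δ η ∈ Ioc 0 η := ⟨lt_min hδ hη, min_le_right δ η⟩
    filter_upwards [eventually_lt_nhds (hpos _ hmem)] with r hr t ht htr
    exact (hmono.reflect_lt ht hmem (htr.trans_lt hr)).trans_le (min_le_left δ η)

end Gauge

section SeparatedPreimages

variable {E : Type*} {X : Set E} {f : E → E} {ω : ℝ → ℝ} {m : ℕ} {δ : ℝ}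

lemma one_le_sum_inv_pow_of_cover_of_ediam_le [PseudoMetricSpace E] (hXne : X.Nonempty)
    (hfX : MapsTo f X X) (hω : MonotoneOn ω (Ici 0))
    (hωmod : ∀ x ∈ X, ∀ y ∈ X, dist (f x) (f y) ≤ ω (dist x y)) (hm : m ≠ 0)
    (hsep : ∀ y ∈ X, ∃ x : Fin m → E,
      (∀ i, x i ∈ X ∧ f (x i) = y) ∧ ∀ i j, i ≠ j → δ ≤ dist (x i) (x j))
    {κ : Type*} {J : Finset κ} {U : κ → Set E} {k : κ → ℕ} {t : κ → ℝ}
    (ht : ∀ j ∈ J, 0 ≤ t j) (htδ : ∀ j ∈ J, t j < δ) (hkδ : ∀ j ∈ J, ω^[k j] (t j) < δ)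
    (hU : ∀ j ∈ J, ediam (U j) ≤ ENNReal.ofReal (t j)) (hcover : X ⊆ ⋃ j ∈ J, U j) :
    1 ≤ ∑ j ∈ J, (m : ℝ≥0∞)⁻¹ ^ k j := by
  have : Nonempty X := hXne.to_subtype
  have : Nonempty (Fin m) := Fin.pos_iff_nonempty.mp (Nat.pos_of_ne_zero hm)
  choose g hg hgδ using fun y : X => hsep y y.2
  let branch (i : Fin m) (y : X) : X := ⟨g y i, (hg y i).1⟩
  have rightInverse_branch (i : Fin m) : RightInverse (branch i) (hfX.restrict f X X) :=
    fun y => Subtype.ext (hg y i).2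
  have branch_separated (y : X) :
      Pairwise fun i j => (branch i y, branch j y) ∉ {p : X × X | dist p.1 p.2 < δ} :=
    fun i j hij => (hgδ y i j hij).not_gt
  have prod_subset_dynEntourage : ∀ j ∈ J,
      ((↑) ⁻¹' U j : Set X) ×ˢ ((↑) ⁻¹' U j) ⊆
        dynEntourage (hfX.restrict f X X) {p | dist p.1 p.2 < δ} (k j) := by
    rintro j hj ⟨x, y⟩ ⟨hx, hy⟩
    have edist_le : edist (x : E) y ≤ ENNReal.ofReal (t j) :=
      (edist_le_ediam_of_mem (s := U j) hx hy).trans (hU j hj)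
    exact mem_dynEntourage_of_dist_le hω (fun x y : X => hωmod x x.2 y y.2) (htδ j hj) (hkδ j hj)
      ((edist_le_ofReal (ht j hj)).mp edist_le)
  have iUnion_preimage_eq_univ : ⋃ j ∈ J, ((↑) ⁻¹' U j : Set X) = univ :=
    eq_univ_of_forall fun x => by simpa using hcover x.2
  simpa only [Fintype.card_fin] using one_le_sum_inv_card_pow_of_cover rightInverse_branch
    branch_separated prod_subset_dynEntourage iUnion_preimage_eq_univ

theorem hausdorff_gauge_measure_pos_of_separated_preimages_general
    [MetricSpace E] [MeasurableSpace E] [BorelSpace E] (hXne : X.Nonempty) (hXc : IsCompact X)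
    (hfX : MapsTo f X X) (hω : MonotoneOn ω (Ici 0))
    (hωmod : ∀ x ∈ X, ∀ y ∈ X, dist (f x) (f y) ≤ ω (dist x y))
    (hm : 2 ≤ m) (hδ : 0 < δ)
    (hsep : ∀ y ∈ X, ∃ x : Fin m → E,
      (∀ i, x i ∈ X ∧ f (x i) = y) ∧ ∀ i j, i ≠ j → δ ≤ dist (x i) (x j))
    {η : ℝ} {h : ℝ → ℝ} (hmono : MonotoneOn h (Ioc 0 η)) (hpos : ∀ t ∈ Ioc 0 η, 0 < h t)
    (hk : ∀ᶠ k : ℕ in atTop, ∃ t ∈ Ioc (0 : ℝ) η, h t = 1 / (m : ℝ) ^ k ∧ ω^[k] t < δ) :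
    0 < Measure.mkMetric (fun d => ENNReal.ofReal (h d.toReal)) X := by
  have one_lt_m : (1 : ℝ) < m := Nat.one_lt_cast.mpr hm
  have tendsto_inv_pow : Tendsto (fun k : ℕ => 1 / (m : ℝ) ^ k) atTop (𝓝 0) := by
    simpa only [one_div, comp_def] using
      tendsto_inv_atTop_zero.comp (tendsto_pow_atTop_atTop_of_one_lt one_lt_m)
  obtain ⟨K, hK⟩ := eventually_atTop.mp (hk.and (tendsto_inv_pow.eventually
    (eventually_forall_lt_of_gauge_le hmono hpos hδ)))
  choose t htη hht hωt using fun k => (hK (k + K) (K.le_add_left k)).1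
  have t_lt_δ (k : ℕ) : t k < δ := (hK (k + K) (K.le_add_left k)).2 _ (htη k) (hht k).le
  have tendsto_gauge : Tendsto (h ∘ t) atTop (𝓝 0) := by
    simpa only [comp_def, hht] using tendsto_inv_pow.comp (tendsto_add_atTop_nat K)
  have gauge_ratio (k : ℕ) : h (t k) ≤ m * h (t (k + 1)) := by
    rw [hht, hht, add_right_comm, pow_succ]
    exact le_of_eq (by field_simp)
  refine mkMetric_ofReal_pos_of_one_le_sum_of_finite_cover hXc hmono hpos htη tendsto_gauge
    gauge_ratio fun J U k hXU hU => ?_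
  have ofReal_gauge (k : ℕ) : ENNReal.ofReal (h (t k)) = (m : ℝ≥0∞)⁻¹ ^ (k + K) := by
    rw [hht, one_div, ← inv_pow, ENNReal.ofReal_pow (by positivity),
      ENNReal.ofReal_inv_of_pos (by positivity), ENNReal.ofReal_natCast]
  simp only [ofReal_gauge]
  exact one_le_sum_inv_pow_of_cover_of_ediam_le hXne hfX hω hωmod (by lia) hsep
    (fun j _ => (htη (k j)).1.le) (fun j _ => t_lt_δ (k j)) (fun j _ => hωt (k j)) hU hXU

end SeparatedPreimages

end

/-- If a continuous self-map of a nonempty compact set `X ⊆ ℝⁿ` with modulus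
of continuity `ω` has the `(m,δ)`-separated preimage property, and `h` is a gauge function on
`(0, η]` such that for all large `k` there is `t_k ∈ (0, η]` with `h t_k = 1/m^k` and
`ω^[k] t_k ≤ δ/2`, then the generalized Hausdorff measure `H_h(X)` is positive. -/
theorem hausdorff_gauge_measure_pos_of_separated_preimages
    (n : ℕ) (hn : 1 ≤ n)
    (X : Set (EuclideanSpace ℝ (Fin n))) (hXne : X.Nonempty) (hXc : IsCompact X)
    (f : EuclideanSpace ℝ (Fin n) → EuclideanSpace ℝ (Fin n))
    (hfc : ContinuousOn f X) (hfX : Set.MapsTo f X X)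
    (ω : ℝ → ℝ) (hωmono : StrictMonoOn ω (Set.Ici 0))
    (hωcont : ContinuousOn ω (Set.Ici 0))
    (hω0 : ω 0 = 0) (hωnonneg : ∀ t, 0 ≤ t → 0 ≤ ω t)
    (hωmod : ∀ x ∈ X, ∀ y ∈ X, dist (f x) (f y) ≤ ω (dist x y))
    (m : ℕ) (hm : 2 ≤ m) (δ : ℝ) (hδ : 0 < δ)
    (hsep : ∀ y ∈ X, ∃ x : Fin m → EuclideanSpace ℝ (Fin n),
      (∀ i, x i ∈ X ∧ f (x i) = y) ∧ ∀ i j, i ≠ j → δ ≤ dist (x i) (x j))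
    (η : ℝ) (hη : 0 < η) (h : ℝ → ℝ)
    (hmono : StrictMonoOn h (Set.Ioc 0 η)) (hcont : ContinuousOn h (Set.Ioc 0 η))
    (hpos : ∀ t ∈ Set.Ioc 0 η, 0 < h t)
    (hlim : Filter.Tendsto h (nhdsWithin 0 (Set.Ioi 0)) (nhds 0))
    (hk : ∀ᶠ k : ℕ in Filter.atTop, ∃ t ∈ Set.Ioc (0:ℝ) η,
      h t = 1 / (m : ℝ) ^ k ∧ ω^[k] t ≤ δ / 2) :
    0 < MeasureTheory.Measure.mkMetric (fun d => ENNReal.ofReal (h d.toReal)) X := by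
  exact hausdorff_gauge_measure_pos_of_separated_preimages_general hXne hXc hfX
    hωmono.monotoneOn hωmod hm hδ hsep hmono.monotoneOn hpos
    (hk.mono fun _ ⟨t, ht, hht, hωt⟩ => ⟨t, ht, hht, hωt.trans_lt (half_lt_self hδ)⟩)
end

section
/- Let n ≥ 1, let X ⊂ ℝ^n be a nonempty compact set and let f : X → X be a continuous map. Suppose there exist an integer m ≥ 2 and δ > 0 such that f has the (m,δ)-separated preimage property on X. If f is Lipschitz continuous with Lipschitz constant L > 1, i.e. |f(x) − f(y)| ≤ L|x − y| for all x, y ∈ X, then the Hausdorff dimension of X satisfies dim X ≥ (log m)/(log L). -/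
open MeasureTheory Metric Set

/-!
Follow uniformly random inverse branches from a base point of the compact set `X`. If
`K ^ k * diam U < δ`, then at each of the last `k + 1` steps at most one of the `m` branches can
still lead into `U`, so the walk ends in `U` with probability at most `m ^ (-(k + 1))`. A weak limit
of the distributions of the walk inherits this bound. When `m = K ^ d` the limit is a probability
measure on `X` with `δ ^ d * μ s ≤ diam s ^ d` for all small `s`, and the mass distribution
principle gives `δ ^ d ≤ μH[d] X`.
-/

open Filter
open scoped ENNReal NNReal Topology

theorem exists_isOpen_superset_ediam_lt {X : Type*} [PseudoEMetricSpace X] {s : Set X} {c : ℝ≥0∞}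
    (h : ediam s < c) : ∃ U, IsOpen U ∧ s ⊆ U ∧ ediam U < c := by
  obtain ⟨r, hr, hrc⟩ := ENNReal.lt_iff_exists_add_pos_lt.1 h
  refine ⟨thickening (r / 2 : ℝ≥0) s, isOpen_thickening,
    self_subset_thickening (NNReal.coe_pos.2 (half_pos hr)) s, ?_⟩
  calc ediam (thickening (r / 2 : ℝ≥0) s) ≤ ediam s + 2 * (r / 2 : ℝ≥0) := ediam_thickening_le _
    _ = ediam s + r := by
      rw [← ENNReal.coe_two, ← ENNReal.coe_mul, mul_div_cancel₀ r two_ne_zero]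
    _ < c := hrc

theorem exists_probabilityMeasure_forall_isOpen_le {X ι : Type*} [TopologicalSpace X] [T2Space X]
    [CompactSpace X] [HasOuterApproxClosed X] [MeasurableSpace X] [BorelSpace X]
    (l : Filter ι) [l.NeBot] (ν : ι → ProbabilityMeasure X) :
    ∃ μ : ProbabilityMeasure X, ∀ U, IsOpen U → ∀ c : ℝ≥0∞,
      (∀ᶠ i in l, (ν i : Measure X) U ≤ c) → (μ : Measure X) U ≤ c := by
  obtain ⟨μ, hμ⟩ := exists_clusterPt_of_compactSpace (map ν l)
  obtain ⟨F, hFl, hFμ⟩ := mapClusterPt_iff_ultrafilter.1 hμ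
  refine ⟨μ, fun U hU c hc ↦ ?_⟩
  calc (μ : Measure X) U ≤ liminf (fun i ↦ (ν i : Measure X) U) F :=
        ProbabilityMeasure.le_liminf_measure_open_of_tendsto hFμ hU
    _ ≤ c := liminf_le_of_frequently_le' (hc.filter_mono hFl).frequently

theorem mul_le_rpow_of_forall_pow_mul_lt {m K δ D a : ℝ≥0∞} {d : ℝ} (hm : 1 < m)
    (hm_top : m ≠ ∞) (hd : 0 ≤ d) (hKm : K ^ d ≤ m) (hDδ : D < δ)
    (ha : ∀ k : ℕ, K ^ k * D < δ → a ≤ m⁻¹ ^ (k + 1)) : δ ^ d * a ≤ D ^ d := by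
  classical
  by_cases hex : ∃ k : ℕ, δ ≤ K ^ k * D
  · obtain ⟨k, hk⟩ : ∃ k, Nat.find hex = k + 1 :=
      Nat.exists_eq_succ_of_ne_zero fun h0 ↦ hDδ.not_ge (by simpa [h0] using Nat.find_spec hex)
    have hδ_le : δ ≤ K ^ (k + 1) * D := hk ▸ Nat.find_spec hex
    have ha_le : a ≤ m⁻¹ ^ (k + 1) := ha k (not_le.1 (Nat.find_min hex (by lia)))
    calc δ ^ d * a ≤ (K ^ (k + 1) * D) ^ d * m⁻¹ ^ (k + 1) := by gcongr
      _ = (K ^ d) ^ (k + 1) * D ^ d * m⁻¹ ^ (k + 1) := by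
        rw [ENNReal.mul_rpow_of_nonneg _ _ hd, ← ENNReal.rpow_natCast_mul, mul_comm (_ : ℝ) d,
          ENNReal.rpow_mul_natCast]
      _ ≤ m ^ (k + 1) * D ^ d * m⁻¹ ^ (k + 1) := by gcongr
      _ = (m * m⁻¹) ^ (k + 1) * D ^ d := by ring
      _ = D ^ d := by
        rw [ENNReal.mul_inv_cancel (zero_lt_one.trans hm).ne' hm_top, one_pow, one_mul]
  · push Not at hex
    have ha_zero : a ≤ 0 :=
      ge_of_tendsto' ((ENNReal.tendsto_pow_atTop_nhds_zero_of_lt_one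
        (ENNReal.inv_lt_one.2 hm)).comp (tendsto_add_atTop_nat 1)) fun k ↦ ha k (hex k)
    simp [nonpos_iff_eq_zero.1 ha_zero]

theorem coe_rpow_logb {K a : ℝ≥0} (hK : 0 < K) (hK_ne_one : K ≠ 1) (ha : 0 < a) :
    (K : ℝ≥0∞) ^ Real.logb K a = a := by
  rw [← ENNReal.coe_rpow_of_ne_zero hK.ne', ENNReal.coe_inj, ← NNReal.coe_inj, NNReal.coe_rpow]
  exact Real.rpow_logb hK (by exact_mod_cast hK_ne_one) ha

/-- The random walk on `X` which at every step applies a map chosen uniformly from the family `g`: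
`branchWalk g x N` is the distribution of its position at time `N` when started from `x`. -/
noncomputable def branchWalk {ι X : Type*} [Fintype ι] [Nonempty ι] (g : ι → X → X) (x : X) :
    ℕ → PMF X
  | 0 => PMF.pure x
  | N + 1 => (branchWalk g x N).bind fun z ↦ (PMF.uniformOfFintype ι).map (g · z)

/-- A family `g` of right inverses, with pairwise `δ`-separated values, of a map that is Lipschitz
with constant `K`. That map is not part of the data: its Lipschitz estimate is expressed through
the points `g i x` and `g j y`, which it sends to `x` and `y`. -/
structure IsSeparatedInverseBranches {ι X : Type*} [EDist X] (g : ι → X → X) (K δ : ℝ≥0∞) :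
    Prop where
  edist_le_mul : ∀ i j x y, edist x y ≤ K * edist (g i x) (g j y)
  le_edist : ∀ x, Pairwise fun i j ↦ δ ≤ edist (g i x) (g j x)

namespace IsSeparatedInverseBranches

section Walk

variable {ι X : Type*} [PseudoEMetricSpace X] {g : ι → X → X} {K δ : ℝ≥0∞}

theorem ediam_setOf_exists_mem_le (hg : IsSeparatedInverseBranches g K δ) (U : Set X) :
    ediam {z | ∃ i, g i z ∈ U} ≤ K * ediam U := by
  refine ediam_le ?_
  rintro x ⟨i, hi⟩ y ⟨j, hj⟩
  exact (hg.edist_le_mul i j x y).trans (by gcongr; exact edist_le_ediam_of_mem hi hj)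

variable [Fintype ι] [Nonempty ι]

theorem toOuterMeasure_map_uniform_le (hg : IsSeparatedInverseBranches g K δ) {U : Set X}
    (hU : ediam U < δ) (z : X) :
    ((PMF.uniformOfFintype ι).map (g · z)).toOuterMeasure U ≤
      {z | ∃ i, g i z ∈ U}.indicator (fun _ ↦ (Fintype.card ι : ℝ≥0∞)⁻¹) z := by
  rw [PMF.toOuterMeasure_map_apply]
  by_cases hz : ∃ i, g i z ∈ U
  · obtain ⟨i, hi⟩ := hz
    have h_unique : (g · z) ⁻¹' U ⊆ {i} := fun j hj ↦ by
      by_contra hji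
      exact (hg.le_edist z hji).not_gt ((edist_le_ediam_of_mem (s := U) hj hi).trans_lt hU)
    rw [indicator_of_mem (mem_ofPred.2 ⟨i, hi⟩), ← PMF.uniformOfFintype_apply i,
      ← PMF.toOuterMeasure_apply_singleton]
    exact measure_mono h_unique
  · have h_empty : (g · z) ⁻¹' U = ∅ := eq_empty_of_forall_notMem fun i hi ↦ hz ⟨i, hi⟩
    simp [h_empty]

theorem branchWalk_succ_toOuterMeasure_le (hg : IsSeparatedInverseBranches g K δ) {U : Set X}
    (hU : ediam U < δ) (x : X) (N : ℕ) :
    (branchWalk g x (N + 1)).toOuterMeasure U ≤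
      (Fintype.card ι : ℝ≥0∞)⁻¹ * (branchWalk g x N).toOuterMeasure {z | ∃ i, g i z ∈ U} := by
  rw [branchWalk, PMF.toOuterMeasure_bind_apply, PMF.toOuterMeasure_apply, ← ENNReal.tsum_mul_left]
  refine ENNReal.tsum_le_tsum fun z ↦ ?_
  grw [hg.toOuterMeasure_map_uniform_le hU z]
  by_cases hz : z ∈ {z | ∃ i, g i z ∈ U}
  · rw [indicator_of_mem hz, indicator_of_mem hz, mul_comm]
  · rw [indicator_of_notMem hz, indicator_of_notMem hz, mul_zero, mul_zero]

theorem branchWalk_succ_toOuterMeasure_le_pow (hg : IsSeparatedInverseBranches g K δ) (hK : 1 ≤ K)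
    (x : X) {k N : ℕ} (hkN : k ≤ N) {U : Set X} (hU : K ^ k * ediam U < δ) :
    (branchWalk g x (N + 1)).toOuterMeasure U ≤ (Fintype.card ι : ℝ≥0∞)⁻¹ ^ (k + 1) := by
  induction k generalizing N U with
  | zero =>
    have h_le_one (V : Set X) : (branchWalk g x N).toOuterMeasure V ≤ 1 :=
      letI : MeasurableSpace X := ⊤
      (PMF.toOuterMeasure_apply_le_toMeasure_apply _ V).trans prob_le_one
    rw [pow_zero, one_mul] at hU
    grw [hg.branchWalk_succ_toOuterMeasure_le hU x N, h_le_one, mul_one, zero_add, pow_one]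
  | succ k ih =>
    obtain ⟨N, rfl⟩ : ∃ M, N = M + 1 := ⟨N - 1, by lia⟩
    have hU_lt : ediam U < δ := (le_mul_of_one_le_left' (one_le_pow₀ hK)).trans_lt hU
    have h_preimage : K ^ k * ediam {z | ∃ i, g i z ∈ U} < δ := by
      refine lt_of_le_of_lt ?_ hU
      rw [pow_succ, mul_assoc]
      gcongr
      exact hg.ediam_setOf_exists_mem_le U
    grw [hg.branchWalk_succ_toOuterMeasure_le hU_lt x (N + 1),
      ih (Nat.le_of_succ_le_succ hkN) h_preimage, pow_succ' _ (k + 1)]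

end Walk

section Compact

variable {ι X : Type*} [Fintype ι] [EMetricSpace X] [CompactSpace X] [Nonempty X]
  {g : ι → X → X} {K : ℝ≥0} {δ : ℝ≥0∞}

theorem exists_probabilityMeasure_le_pow [Nonempty ι] [MeasurableSpace X] [BorelSpace X]
    (hg : IsSeparatedInverseBranches g K δ) (hK : 1 ≤ K) :
    ∃ μ : ProbabilityMeasure X, ∀ (s : Set X) (k : ℕ), (K : ℝ≥0∞) ^ k * ediam s < δ →
      (μ : Measure X) s ≤ (Fintype.card ι : ℝ≥0∞)⁻¹ ^ (k + 1) := by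
  obtain ⟨x⟩ := ‹Nonempty X›
  obtain ⟨μ, hμ⟩ := exists_probabilityMeasure_forall_isOpen_le atTop
    fun N ↦ (⟨(branchWalk g x (N + 1)).toMeasure, inferInstance⟩ : ProbabilityMeasure X)
  refine ⟨μ, fun s k hs ↦ ?_⟩
  have hKk : (K : ℝ≥0∞) ^ k ≠ 0 := pow_ne_zero _ (by exact_mod_cast (zero_lt_one.trans_le hK).ne')
  have hKk_top : (K : ℝ≥0∞) ^ k ≠ ∞ := ENNReal.pow_ne_top ENNReal.coe_ne_top
  have h_lt_iff (t : Set X) : ediam t < δ / K ^ k ↔ (K : ℝ≥0∞) ^ k * ediam t < δ := by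
    rw [ENNReal.lt_div_iff_mul_lt (.inl hKk) (.inl hKk_top), mul_comm]
  obtain ⟨U, hU_open, hsU, hU⟩ := exists_isOpen_superset_ediam_lt ((h_lt_iff s).2 hs)
  refine (measure_mono hsU).trans (hμ U hU_open _ ?_)
  filter_upwards [eventually_ge_atTop k] with N hN
  rw [ProbabilityMeasure.coe_mk,
    PMF.toMeasure_apply_eq_toOuterMeasure_apply _ hU_open.measurableSet]
  exact hg.branchWalk_succ_toOuterMeasure_le_pow (by exact_mod_cast hK) x hN ((h_lt_iff U).1 hU)

theorem rpow_le_hausdorffMeasure_univ [MeasurableSpace X] [BorelSpace X]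
    (hg : IsSeparatedInverseBranches g K δ) (hδ : δ ≠ 0) (hK : 1 ≤ K) (hι : 1 < Fintype.card ι)
    {d : ℝ} (hd : 0 ≤ d) (hKd : (K : ℝ≥0∞) ^ d ≤ Fintype.card ι) :
    δ ^ d ≤ μH[d] (univ : Set X) := by
  have : Nonempty ι := Fintype.card_pos_iff.1 (zero_lt_one.trans hι)
  obtain ⟨μ, hμ⟩ := hg.exists_probabilityMeasure_le_pow hK
  obtain ⟨ε, hε, hεδ⟩ := exists_between (pos_iff_ne_zero.2 hδ)
  have h_frostman : δ ^ d • (μ : Measure X) ≤ μH[d] :=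
    Measure.le_hausdorffMeasure d _ ε hε fun s hs ↦
      mul_le_rpow_of_forall_pow_mul_lt (by exact_mod_cast hι) (ENNReal.natCast_ne_top _) hd hKd
        (hs.trans_lt hεδ) (hμ s)
  simpa using h_frostman univ

theorem ofReal_logb_card_le_dimH_univ (hg : IsSeparatedInverseBranches g K δ) (hδ : δ ≠ 0)
    (hK : 1 < K) (hι : 1 < Fintype.card ι) :
    ENNReal.ofReal (Real.logb K (Fintype.card ι)) ≤ dimH (univ : Set X) := by
  borelize X
  have hd : 0 ≤ Real.logb K (Fintype.card ι) :=
    Real.logb_nonneg (by exact_mod_cast hK) (by exact_mod_cast hι.le)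
  have hKd : (K : ℝ≥0∞) ^ Real.logb K (Fintype.card ι) = Fintype.card ι := by
    exact_mod_cast coe_rpow_logb (a := Fintype.card ι) (zero_lt_one.trans hK) hK.ne'
      (by exact_mod_cast zero_lt_one.trans hι)
  refine le_dimH_of_hausdorffMeasure_ne_zero (pos_iff_ne_zero.1 ?_)
  rw [Real.coe_toNNReal _ hd]
  calc 0 < δ ^ Real.logb K (Fintype.card ι) :=
        ENNReal.rpow_pos_of_nonneg (pos_iff_ne_zero.2 hδ) hd
    _ ≤ μH[Real.logb K (Fintype.card ι)] univ :=
        hg.rpow_le_hausdorffMeasure_univ hδ hK.le hι hd hKd.le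

end Compact

end IsSeparatedInverseBranches

theorem exists_isSeparatedInverseBranches {E ι : Type*} [PseudoEMetricSpace E] {X : Set E}
    {f : E → E} {K : ℝ≥0} {δ : ℝ≥0∞} (hf : LipschitzOnWith K f X)
    (hsep : ∀ y ∈ X, ∃ x : ι → E, (∀ i, x i ∈ X ∧ f (x i) = y) ∧
      Pairwise fun i j ↦ δ ≤ edist (x i) (x j)) :
    ∃ g : ι → X → X, IsSeparatedInverseBranches g K δ := by
  choose x hx hx_sep using fun y : X ↦ hsep y y.2
  refine ⟨fun i y ↦ ⟨x y i, (hx y i).1⟩, fun i j y z ↦ ?_, hx_sep⟩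
  calc edist y z = edist (f (x y i)) (f (x z j)) := by
        rw [(hx y i).2, (hx z j).2, Subtype.edist_eq]
    _ ≤ K * edist (x y i) (x z j) := hf (hx y i).1 (hx z j).1

theorem dimH_ge_of_separated_preimages_lipschitz_general {E : Type*} [EMetricSpace E] {X : Set E}
    (hXne : X.Nonempty) (hXc : IsCompact X) {f : E → E} {K : ℝ≥0} (hK : 1 < K)
    (hf : LipschitzOnWith K f X) {m : ℕ} (hm : 1 < m) {δ : ℝ≥0∞} (hδ : δ ≠ 0)
    (hsep : ∀ y ∈ X, ∃ x : Fin m → E, (∀ i, x i ∈ X ∧ f (x i) = y) ∧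
      Pairwise fun i j ↦ δ ≤ edist (x i) (x j)) :
    ENNReal.ofReal (Real.log m / Real.log K) ≤ dimH X := by
  obtain ⟨g, hg⟩ := exists_isSeparatedInverseBranches hf hsep
  have := hXne.to_subtype
  have := isCompact_iff_compactSpace.1 hXc
  calc ENNReal.ofReal (Real.log m / Real.log K) ≤ dimH (univ : Set X) := by
        simpa [Real.logb] using hg.ofReal_logb_card_le_dimH_univ hδ hK (by simpa using hm)
    _ = dimH X := by rw [← isometry_subtype_coe.dimH_image, image_univ, Subtype.range_coe]

/-- If a continuous self-map of a nonempty compact set `X ⊆ ℝⁿ` has the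
`(m,δ)`-separated preimage property and is Lipschitz with constant `L > 1`, then the
Hausdorff dimension of `X` is at least `log m / log L`. -/
theorem dimH_ge_of_separated_preimages_lipschitz
    (n : ℕ) (hn : 1 ≤ n)
    (X : Set (EuclideanSpace ℝ (Fin n))) (hXne : X.Nonempty) (hXc : IsCompact X)
    (f : EuclideanSpace ℝ (Fin n) → EuclideanSpace ℝ (Fin n))
    (hfc : ContinuousOn f X) (hfX : Set.MapsTo f X X)
    (m : ℕ) (hm : 2 ≤ m) (δ : ℝ) (hδ : 0 < δ)
    (hsep : ∀ y ∈ X, ∃ x : Fin m → EuclideanSpace ℝ (Fin n),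
      (∀ i, x i ∈ X ∧ f (x i) = y) ∧ ∀ i j, i ≠ j → δ ≤ dist (x i) (x j))
    (L : ℝ) (hL : 1 < L)
    (hlip : ∀ x ∈ X, ∀ y ∈ X, dist (f x) (f y) ≤ L * dist x y) :
    ENNReal.ofReal (Real.log m / Real.log L) ≤ dimH X := by
  lift L to NNReal using zero_le_one.trans hL.le
  refine dimH_ge_of_separated_preimages_lipschitz_general hXne hXc (by exact_mod_cast hL)
    (LipschitzOnWith.of_dist_le_mul hlip) hm (ENNReal.ofReal_pos.2 hδ).ne' fun y hy ↦ ?_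
  simpa only [Pairwise, edist_dist, ENNReal.ofReal_le_ofReal_iff dist_nonneg] using hsep y hy
end

section
/- Let n ≥ 1, let X ⊂ ℝ^n be a nonempty compact set and let f : X → X be a map with modulus of continuity ω. Suppose there exist an integer m ≥ 2 and δ > 0 such that f has the (m,δ)-separated preimage property on X. Then for every y ∈ X there exists a sequence (E_k)_{k≥0} of finite subsets of X with the following properties: E_0 = {y}; card E_k = m^k for all k; for every k ≥ 1, every point of E_{k−1} has exactly m preimages under f lying in E_k, and any two distinct points x, x' ∈ E_k with f(x) = f(x') satisfy |x − x'| ≥ δ. Moreover, defining the probability measures μ_k := m^{−k} Σ_{x ∈ E_k} δ_x (where δ_x is the Dirac measure at x), one has μ_{k+1}(B(x,r)) ≤ (1/m) · μ_k(B(f(x), ω(r))) for every k ≥ 0, every x ∈ X and every r with 0 < r ≤ δ/2, where B(z,s) denotes the open Euclidean ball of radius s centered at z. -/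
open MeasureTheory Metric Set

/-!
Every finite `F ⊆ X` has a layer `E ⊆ X` of preimages, consisting of `m` points at mutual distance
at least `δ` over each point of `F`; iterating from `{y}` gives the sets `E_k`. Two points of a ball
of radius `r ≤ δ / 2` are at distance less than `δ`, so `f` is injective on the part of `E` in
`B(x, r)`. Since `f` maps this part into `F ∩ B(f x, ω r)`, the latter has at least as many points,
and the normalisations `m^{-(k+1)}` and `m^{-k}` account for the factor `1 / m`.
-/

section PseudoMetric

variable {α β : Type*} [PseudoMetricSpace α] {X : Set α} {m : ℕ} {δ : ℝ}

/-- The `(m, δ)`-separated preimage property of `f` on `X`. The `m` preimages are given as a family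
indexed by `Fin m`, with `f` defined on the whole space. -/
def HasSeparatedPreimages (f : α → α) (X : Set α) (m : ℕ) (δ : ℝ) : Prop :=
  ∀ y ∈ X, ∃ x : Fin m → α, (∀ i, x i ∈ X ∧ f (x i) = y) ∧ ∀ i j, i ≠ j → δ ≤ dist (x i) (x j)

/-- `E` is a layer of preimages in `X` over `F`, as `E_{k+1}` is over `E_k` in the preimage tree:
`f` maps `E` to `F`, and the fibres of `E` over the points of `F` are `δ`-separated sets of `m`
points. -/
structure IsSeparatedPreimageLayer (f : α → β) (X : Set α) (m : ℕ) (δ : ℝ) (F : Finset β)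
    (E : Finset α) : Prop where
  subset : (E : Set α) ⊆ X
  mapsTo : MapsTo f E F
  ncard_fiber : ∀ z ∈ F, {x ∈ (E : Set α) | f x = z}.ncard = m
  le_dist : ∀ x ∈ E, ∀ x' ∈ E, x ≠ x' → f x = f x' → δ ≤ dist x x'

theorem injective_of_le_dist {ι : Type*} {x : ι → α} (hδ : 0 < δ)
    (hx : ∀ i j, i ≠ j → δ ≤ dist (x i) (x j)) : Function.Injective x := by
  intro i j hij
  by_contra hne
  have hle := hx i j hne
  rw [hij, dist_self] at hle
  exact hδ.not_ge hle

theorem HasSeparatedPreimages.exists_layer {f : α → α} (hf : HasSeparatedPreimages f X m δ)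
    (hδ : 0 < δ) {F : Finset α} (hF : (F : Set α) ⊆ X) :
    ∃ E, IsSeparatedPreimageLayer f X m δ F E := by
  classical
  choose! x hx hdist using hf
  have mem_layer {w : α} : w ∈ Finset.image₂ x F Finset.univ ↔ ∃ z ∈ F, ∃ i, x z i = w := by
    simp only [Finset.mem_image₂, Finset.mem_univ, true_and]
  refine ⟨Finset.image₂ x F Finset.univ, ?_, ?_, ?_, ?_⟩
  · intro w hw
    obtain ⟨z, hz, i, rfl⟩ := mem_layer.1 hw
    exact (hx z (hF hz) i).1
  · intro w hw
    obtain ⟨z, hz, i, rfl⟩ := mem_layer.1 hw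
    rwa [(hx z (hF hz) i).2]
  · intro z hz
    have fiber_eq_range :
        {w ∈ (Finset.image₂ x F Finset.univ : Set α) | f w = z} = range (x z) := by
      ext w
      constructor
      · rintro ⟨hw, hwz⟩
        obtain ⟨z', hz', i, rfl⟩ := mem_layer.1 hw
        rw [(hx z' (hF hz') i).2] at hwz
        exact ⟨i, by rw [hwz]⟩
      · rintro ⟨i, rfl⟩
        exact ⟨mem_layer.2 ⟨z, hz, i, rfl⟩, (hx z (hF hz) i).2⟩
    rw [fiber_eq_range, ncard_range_of_injective (injective_of_le_dist hδ (hdist z (hF hz))),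
      Nat.card_fin]
  · intro w hw w' hw' hne hfw
    obtain ⟨z, hz, i, rfl⟩ := mem_layer.1 hw
    obtain ⟨z', hz', j, rfl⟩ := mem_layer.1 hw'
    rw [(hx z (hF hz) i).2, (hx z' (hF hz') j).2] at hfw
    subst hfw
    exact hdist z (hF hz) i j fun hij => hne (by rw [hij])

theorem HasSeparatedPreimages.exists_layer_sequence {f : α → α}
    (hf : HasSeparatedPreimages f X m δ) (hδ : 0 < δ) {y : α} (hy : y ∈ X) :
    ∃ E : ℕ → Finset α, E 0 = {y} ∧ ∀ k, IsSeparatedPreimageLayer f X m δ (E k) (E (k + 1)) := by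
  choose next hnext using fun F : {F : Finset α // (F : Set α) ⊆ X} => hf.exists_layer hδ F.2
  let step (F : {F : Finset α // (F : Set α) ⊆ X}) : {F : Finset α // (F : Set α) ⊆ X} :=
    ⟨next F, (hnext F).subset⟩
  refine ⟨fun k => (step^[k] ⟨{y}, by simpa using hy⟩).1, rfl, fun k => ?_⟩
  beta_reduce
  rw [Function.iterate_succ_apply']
  exact hnext _

theorem mapsTo_ball_of_dist_le [PseudoMetricSpace β] {f : α → β} {ω : ℝ → ℝ}
    (hωmono : StrictMonoOn ω (Ici 0))
    (hω : ∀ x ∈ X, ∀ y ∈ X, dist (f x) (f y) ≤ ω (dist x y)) {x : α} (hx : x ∈ X) (r : ℝ) :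
    MapsTo f (X ∩ ball x r) (ball (f x) (ω r)) := fun z ⟨hz, hzr⟩ =>
  (hω z hz x hx).trans_lt (hωmono dist_nonneg (dist_nonneg.trans hzr.le) hzr)

namespace IsSeparatedPreimageLayer

variable {f : α → β} {F : Finset β} {E : Finset α}

theorem card_eq (h : IsSeparatedPreimageLayer f X m δ F E) : E.card = F.card * m := by
  classical
  rw [Finset.card_eq_sum_card_fiberwise h.mapsTo]
  refine Finset.sum_const_nat fun z hz => ?_
  rw [← h.ncard_fiber z hz, ← ncard_coe_finset, Finset.coe_filter]
  rfl

theorem injOn_ball (h : IsSeparatedPreimageLayer f X m δ F E) (x : α) {r : ℝ} (hr : r ≤ δ / 2) :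
    InjOn f (E ∩ ball x r) := by
  rintro z ⟨hz, hzr⟩ z' ⟨hz', hzr'⟩ hff
  by_contra hne
  have dist_lt : dist z z' < δ :=
    calc dist z z' ≤ dist z x + dist z' x := dist_triangle_right z z' x
      _ < r + r := add_lt_add hzr hzr'
      _ ≤ δ := by linarith
  exact dist_lt.not_ge (h.le_dist z hz z' hz' hne hff)

theorem ncard_inter_ball_le [PseudoMetricSpace β] (h : IsSeparatedPreimageLayer f X m δ F E)
    {x : α} {r s : ℝ} (hball : MapsTo f (X ∩ ball x r) (ball (f x) s)) (hr : r ≤ δ / 2) :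
    (E ∩ ball x r : Set α).ncard ≤ (F ∩ ball (f x) s : Set β).ncard :=
  ncard_le_ncard_of_injOn f
    (fun _ hz => ⟨h.mapsTo hz.1, hball ⟨h.subset hz.1, hz.2⟩⟩)
    (h.injOn_ball x hr) (F.finite_toSet.inter_of_left _)

end IsSeparatedPreimageLayer

end PseudoMetric

theorem sum_dirac_apply_eq_ncard {α : Type*} [MeasurableSpace α] (s : Finset α) {A : Set α}
    (hA : MeasurableSet A) :
    (∑ z ∈ s, Measure.dirac z) A = ((s : Set α) ∩ A).ncard := by
  classical
  have coe_filter_mem : ((s.filter (· ∈ A) : Finset α) : Set α) = ↑s ∩ A := s.coe_filter _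
  rw [← coe_filter_mem, ncard_coe_finset, Finset.natCast_card_filter, Measure.finsetSum_apply]
  simp only [Measure.dirac_apply' _ hA, indicator_apply, Pi.one_apply]

theorem IsSeparatedPreimageLayer.smul_sum_dirac_ball_le {α β : Type*} [PseudoMetricSpace α]
    [MeasurableSpace α] [OpensMeasurableSpace α] [PseudoMetricSpace β] [MeasurableSpace β]
    [OpensMeasurableSpace β] {f : α → β} {X : Set α} {m : ℕ} {δ : ℝ} {F : Finset β} {E : Finset α}
    (h : IsSeparatedPreimageLayer f X m δ F E) (hm : m ≠ 0) (k : ℕ) {x : α}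
    {r s : ℝ} (hball : MapsTo f (X ∩ ball x r) (ball (f x) s)) (hr : r ≤ δ / 2) :
    (((m : ENNReal) ^ (k + 1))⁻¹ • ∑ z ∈ E, Measure.dirac z) (ball x r)
      ≤ (m : ENNReal)⁻¹ * (((m : ENNReal) ^ k)⁻¹ • ∑ z ∈ F, Measure.dirac z) (ball (f x) s) := by
  have inv_pow_succ : ((m : ENNReal) ^ (k + 1))⁻¹ = (m : ENNReal)⁻¹ * ((m : ENNReal) ^ k)⁻¹ := by
    rw [pow_succ', ENNReal.mul_inv (.inl (Nat.cast_ne_zero.2 hm)) (.inl (ENNReal.natCast_ne_top m))]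
  rw [Measure.smul_apply, Measure.smul_apply, smul_eq_mul, smul_eq_mul, inv_pow_succ, mul_assoc,
    sum_dirac_apply_eq_ncard E measurableSet_ball, sum_dirac_apply_eq_ncard F measurableSet_ball]
  gcongr _ * (_ * ?_)
  exact_mod_cast h.ncard_inter_ball_le hball hr

theorem exists_preimage_tree_and_measures_general {α : Type*} [PseudoMetricSpace α]
    [MeasurableSpace α] [OpensMeasurableSpace α] {X : Set α} {f : α → α} {ω : ℝ → ℝ}
    (hωmono : StrictMonoOn ω (Ici 0))
    (hωmod : ∀ x ∈ X, ∀ y ∈ X, dist (f x) (f y) ≤ ω (dist x y))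
    {m : ℕ} (hm : m ≠ 0) {δ : ℝ} (hδ : 0 < δ) (hsep : HasSeparatedPreimages f X m δ)
    {y : α} (hy : y ∈ X) :
    ∃ E : ℕ → Finset α,
      E 0 = {y} ∧
      (∀ k, (E k : Set α) ⊆ X) ∧
      (∀ k, (E k).card = m ^ k) ∧
      (∀ k, ∀ z ∈ E k, {x ∈ (E (k + 1) : Set α) | f x = z}.ncard = m) ∧
      (∀ k, ∀ x ∈ E (k + 1), ∀ x' ∈ E (k + 1), x ≠ x' → f x = f x' → δ ≤ dist x x') ∧
      (∀ k, ∀ x ∈ X, ∀ r : ℝ, r ≤ δ / 2 →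
        (((m : ENNReal) ^ (k + 1))⁻¹ • ∑ z ∈ E (k + 1), Measure.dirac z) (ball x r)
          ≤ (m : ENNReal)⁻¹ *
            (((m : ENNReal) ^ k)⁻¹ • ∑ z ∈ E k, Measure.dirac z) (ball (f x) (ω r))) := by
  obtain ⟨E, hE0, hE⟩ := hsep.exists_layer_sequence hδ hy
  refine ⟨E, hE0, fun k => ?_, fun k => ?_, fun k => (hE k).ncard_fiber, fun k => (hE k).le_dist,
    fun k x hx r => (hE k).smul_sum_dirac_ball_le hm k (mapsTo_ball_of_dist_le hωmono hωmod hx r)⟩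
  · cases k with
    | zero => simpa [hE0] using hy
    | succ k => exact (hE k).subset
  · induction k with
    | zero => simp [hE0]
    | succ k ih => rw [(hE k).card_eq, ih, pow_succ]

/-- Construction of the sets `E_k` and the measures
`μ_k = m^{-k} ∑_{x ∈ E_k} δ_x` used in the mass distribution argument. -/
theorem exists_preimage_tree_and_measures
    (n : ℕ) (hn : 1 ≤ n)
    (X : Set (EuclideanSpace ℝ (Fin n))) (hXne : X.Nonempty) (hXc : IsCompact X)
    (f : EuclideanSpace ℝ (Fin n) → EuclideanSpace ℝ (Fin n))
    (hfX : Set.MapsTo f X X)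
    (ω : ℝ → ℝ) (hωmono : StrictMonoOn ω (Set.Ici 0))
    (hωcont : ContinuousOn ω (Set.Ici 0))
    (hω0 : ω 0 = 0) (hωnonneg : ∀ t, 0 ≤ t → 0 ≤ ω t)
    (hωmod : ∀ x ∈ X, ∀ y ∈ X, dist (f x) (f y) ≤ ω (dist x y))
    (m : ℕ) (hm : 2 ≤ m) (δ : ℝ) (hδ : 0 < δ)
    (hsep : ∀ y ∈ X, ∃ x : Fin m → EuclideanSpace ℝ (Fin n),
      (∀ i, x i ∈ X ∧ f (x i) = y) ∧ ∀ i j, i ≠ j → δ ≤ dist (x i) (x j))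
    (y : EuclideanSpace ℝ (Fin n)) (hy : y ∈ X) :
    ∃ E : ℕ → Finset (EuclideanSpace ℝ (Fin n)),
      E 0 = {y} ∧
      (∀ k, (E k : Set (EuclideanSpace ℝ (Fin n))) ⊆ X) ∧
      (∀ k, (E k).card = m ^ k) ∧
      (∀ k, ∀ z ∈ E k, {x ∈ (E (k + 1) : Set (EuclideanSpace ℝ (Fin n))) | f x = z}.ncard = m) ∧
      (∀ k, ∀ x ∈ E (k + 1), ∀ x' ∈ E (k + 1), x ≠ x' → f x = f x' → δ ≤ dist x x') ∧
      (∀ k, ∀ x ∈ X, ∀ r : ℝ, 0 < r → r ≤ δ / 2 →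
        (((m : ENNReal) ^ (k + 1))⁻¹ • ∑ z ∈ E (k + 1), MeasureTheory.Measure.dirac z)
            (Metric.ball x r)
          ≤ (m : ENNReal)⁻¹ *
            (((m : ENNReal) ^ k)⁻¹ • ∑ z ∈ E k, MeasureTheory.Measure.dirac z)
              (Metric.ball (f x) (ω r))) := by
  obtain ⟨E, hE0, hEX, hcard, hfiber, hdist, hball⟩ :=
    exists_preimage_tree_and_measures_general hωmono hωmod (by omega) hδ hsep hy
  exact ⟨E, hE0, hEX, hcard, hfiber, hdist, fun k x hx r _ => hball k x hx r⟩
end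

section
/- Let (X,d) be a nonempty compact metric space and let f : X → X be a continuous surjection. Suppose that for every x ∈ X there exist a positive integer m(x), a real number δ(x) > 0 and a real number ε(x) > 0 such that for every y ∈ X with d(y,x) < ε(x) there exist u, v ∈ X with f^{m(x)}(u) = f^{m(x)}(v) = y and d(u,v) ≥ δ(x). Then there exist a positive integer m and δ > 0 such that for every y ∈ X there exist u, v ∈ X with f^m(u) = f^m(v) = y and d(u,v) ≥ δ. -/
open Function

/-!
Lifting two separated preimages through further iterates of `f` keeps them separated, with a
constant given by uniform continuity. Hence separation of preimages on a set persists for all later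
iterates, so finitely many sets, each with its own iterate, can be served by a common one.
-/

open Filter Topology

/-- Over every point of `s`, the map `g` has two preimages at distance at least `δ`, for a constant
`δ > 0` that is the same for all points of `s`. -/
def HasSeparatedPreimagesOn {X Y : Type*} [PseudoMetricSpace X] (g : X → Y) (s : Set Y) : Prop :=
  ∃ δ : ℝ, 0 < δ ∧ ∀ y ∈ s, ∃ u v : X, g u = y ∧ g v = y ∧ δ ≤ dist u v

namespace HasSeparatedPreimagesOn

section Sets

variable {X Y : Type*} [PseudoMetricSpace X] {g : X → Y} {s t : Set Y}

theorem empty (g : X → Y) : HasSeparatedPreimagesOn g ∅ :=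
  ⟨1, one_pos, fun _ hy => hy.elim⟩

theorem mono (hst : s ⊆ t) (ht : HasSeparatedPreimagesOn g t) : HasSeparatedPreimagesOn g s :=
  let ⟨δ, hδ, h⟩ := ht
  ⟨δ, hδ, fun y hy => h y (hst hy)⟩

theorem union (hs : HasSeparatedPreimagesOn g s) (ht : HasSeparatedPreimagesOn g t) :
    HasSeparatedPreimagesOn g (s ∪ t) := by
  obtain ⟨δ, hδ, hs⟩ := hs
  obtain ⟨η, hη, ht⟩ := ht
  refine ⟨min δ η, lt_min hδ hη, ?_⟩
  rintro y (hy | hy)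
  · obtain ⟨u, v, hu, hv, huv⟩ := hs y hy
    exact ⟨u, v, hu, hv, min_le_of_left_le huv⟩
  · obtain ⟨u, v, hu, hv, huv⟩ := ht y hy
    exact ⟨u, v, hu, hv, min_le_of_right_le huv⟩

theorem comp {Z : Type*} [PseudoMetricSpace Z] {h : Z → X} (hg : HasSeparatedPreimagesOn g s)
    (hh : UniformContinuous h) (hsurj : Surjective h) : HasSeparatedPreimagesOn (g ∘ h) s := by
  obtain ⟨δ, hδ, hg⟩ := hg
  obtain ⟨η, hη, dist_lt⟩ := Metric.uniformContinuous_iff.1 hh δ hδ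
  refine ⟨η, hη, fun y hy => ?_⟩
  obtain ⟨u, v, hu, hv, huv⟩ := hg y hy
  obtain ⟨u, rfl⟩ := hsurj u
  obtain ⟨v, rfl⟩ := hsurj v
  exact ⟨u, v, hu, hv, not_lt.1 fun hlt => huv.not_gt (dist_lt hlt)⟩

end Sets

variable {X : Type*} [PseudoMetricSpace X] {f : X → X} {s : Set X} {m n : ℕ}

theorem iterate_of_le (hs : HasSeparatedPreimagesOn f^[m] s) (hf : UniformContinuous f)
    (hsurj : Surjective f) (hmn : m ≤ n) : HasSeparatedPreimagesOn f^[n] s := by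
  obtain ⟨k, rfl⟩ := Nat.exists_eq_add_of_le hmn
  rw [iterate_add]
  exact hs.comp (hf.iterate f k) (hsurj.iterate k)

end HasSeparatedPreimagesOn

theorem exists_uniform_separated_preimages_of_pointwise_general
    {X : Type*} [PseudoMetricSpace X] {f : X → X} (hf : UniformContinuous f)
    (hsurj : Surjective f) {K : Set X} (hK : IsCompact K)
    (hloc : ∀ x ∈ K, ∃ m : ℕ, ∃ t ∈ 𝓝[K] x, HasSeparatedPreimagesOn f^[m] t) :
    ∀ᶠ m in atTop, HasSeparatedPreimagesOn f^[m] K := by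
  refine hK.induction_on (p := fun s => ∀ᶠ m in atTop, HasSeparatedPreimagesOn f^[m] s)
    (.of_forall fun m => .empty f^[m]) (fun s t hst ht => ht.mono fun m => .mono hst)
    (fun s t hs ht => (hs.and ht).mono fun m h => h.1.union h.2) fun x hx => ?_
  obtain ⟨m, t, ht, hm⟩ := hloc x hx
  exact ⟨t, ht, (eventually_ge_atTop m).mono fun n hmn => hm.iterate_of_le hf hsurj hmn⟩

/-- For a continuous surjection of a nonempty compact metric space, a
pointwise local two-separated-preimage property (under some iterate, locally near each
point) can be uniformized: there are a single iterate `f^m` and a single separation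
constant `δ > 0` valid at all points. -/
theorem exists_uniform_separated_preimages_of_pointwise
    (X : Type*) [MetricSpace X] [CompactSpace X] [Nonempty X]
    (f : X → X) (hfc : Continuous f) (hfs : Function.Surjective f)
    (H : ∀ x : X, ∃ m : ℕ, 0 < m ∧ ∃ δ : ℝ, 0 < δ ∧ ∃ ε : ℝ, 0 < ε ∧
      ∀ y : X, dist y x < ε →
        ∃ u v : X, f^[m] u = y ∧ f^[m] v = y ∧ δ ≤ dist u v) :
    ∃ m : ℕ, 0 < m ∧ ∃ δ : ℝ, 0 < δ ∧
      ∀ y : X, ∃ u v : X, f^[m] u = y ∧ f^[m] v = y ∧ δ ≤ dist u v := by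
  have hsep : ∀ᶠ m in atTop, HasSeparatedPreimagesOn f^[m] Set.univ :=
    exists_uniform_separated_preimages_of_pointwise_general
      (CompactSpace.uniformContinuous_of_continuous hfc) hfs isCompact_univ fun x _ =>
        let ⟨m, _, δ, hδ, _, hε, h⟩ := H x
        ⟨m, _, mem_nhdsWithin_of_mem_nhds (Metric.ball_mem_nhds x hε), δ, hδ, h⟩
  obtain ⟨m, hm, δ, hδ, h⟩ := ((eventually_gt_atTop 0).and hsep).exists
  exact ⟨m, hm, δ, hδ, fun y => h y (Set.mem_univ y)⟩
end

section
/- Let (X,d) be a compact metric space, let f : X → X be a map and let δ > 0. Let (y_k)_{k≥0} be a sequence in X with f(y_{k+1}) = y_k for all k ≥ 0, and suppose that for every k ≥ 0 and every z ∈ X with d(y_k, z) < δ one has d(f(y_k), f(z)) ≤ d(y_k, z)/2. Then the points y_k are not pairwise distinct; that is, there exist indices k ≠ l with y_k = y_l. -/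
/-!
By total boundedness, among any `N` consecutive points of the orbit two are `δ`-close, so some
fixed gap `p` satisfies `dist (y m) (y (m + p)) < δ` for infinitely many `m`. Contracting from
such an `m` back to a given index `k ≤ m` bounds `dist (y k) (y (k + p))` by `δ / 2 ^ (m - k)`;
letting `m` grow shows that `y` is `p`-periodic.
-/

open Filter Set Topology
open scoped NNReal

theorem exists_pos_frequently_eq_add {α : Type*} [Finite α] (c : ℕ → α) :
    ∃ p > 0, ∃ᶠ m in atTop, c m = c (m + p) := by
  by_contra! h_ne
  have h_ne_of_gap : ∀ᶠ m in atTop, ∀ p ∈ Finset.Icc 1 (Nat.card α), c m ≠ c (m + p) :=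
    (eventually_all_finset _).2 fun p hp => h_ne p (Finset.mem_Icc.1 hp).1
  obtain ⟨M, hM⟩ := eventually_atTop.1 h_ne_of_gap
  have h_inj : Function.Injective fun i : Fin (Nat.card α + 1) => c (M + i) := by
    refine .of_lt_imp_ne fun i j hij heq => ?_
    refine hM (M + i) (by lia) (j - i) (Finset.mem_Icc.2 (by lia)) ?_
    rwa [show M + (i : ℕ) + (j - i) = M + j by lia]
  simpa using Nat.card_le_card_of_injective _ h_inj

section PseudoMetricSpace

variable {X : Type*} [PseudoMetricSpace X] {y : ℕ → X} {K : ℝ≥0} {δ : ℝ}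

theorem exists_pos_frequently_dist_add_lt (hy : TotallyBounded (range y)) (hδ : 0 < δ) :
    ∃ p > 0, ∃ᶠ m in atTop, dist (y m) (y (m + p)) < δ := by
  obtain ⟨t, ht_finite, ht_cover⟩ := Metric.totallyBounded_iff.1 hy (δ / 2) (half_pos hδ)
  have h_center (m : ℕ) : ∃ x : t, dist (y m) x < δ / 2 := by
    simpa using ht_cover (mem_range_self m)
  choose c hc using h_center
  have : Finite t := ht_finite
  obtain ⟨p, hp, h_freq⟩ := exists_pos_frequently_eq_add c
  refine ⟨p, hp, h_freq.mono fun m hm => ?_⟩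
  calc dist (y m) (y (m + p))
      ≤ dist (y m) (c m) + dist (y (m + p)) (c m) := dist_triangle_right _ _ _
    _ < δ / 2 + δ / 2 := add_lt_add (hc m) (hm ▸ hc (m + p))
    _ = δ := add_halves δ

theorem dist_le_pow_mul_dist_add (hK : K ≤ 1)
    (h_step : ∀ k l, dist (y (k + 1)) (y (l + 1)) < δ →
      dist (y k) (y l) ≤ K * dist (y (k + 1)) (y (l + 1)))
    {k l m : ℕ} (h_lt : dist (y (k + m)) (y (l + m)) < δ) :
    dist (y k) (y l) ≤ K ^ m * dist (y (k + m)) (y (l + m)) := by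
  induction m with
  | zero => simp
  | succ m ih =>
    have h_last := h_step (k + m) (l + m) h_lt
    have h_lt' : dist (y (k + m)) (y (l + m)) < δ :=
      (h_last.trans (mul_le_of_le_one_left dist_nonneg hK)).trans_lt h_lt
    calc dist (y k) (y l)
        ≤ K ^ m * dist (y (k + m)) (y (l + m)) := ih h_lt'
      _ ≤ K ^ m * (K * dist (y (k + (m + 1))) (y (l + (m + 1)))) := by gcongr; exact h_last
      _ = K ^ (m + 1) * dist (y (k + (m + 1))) (y (l + (m + 1))) := by ring

theorem dist_eq_zero_of_frequently_dist_add_lt (hK : K < 1)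
    (h_step : ∀ k l, dist (y (k + 1)) (y (l + 1)) < δ →
      dist (y k) (y l) ≤ K * dist (y (k + 1)) (y (l + 1)))
    {k l : ℕ} (h_freq : ∃ᶠ m in atTop, dist (y (k + m)) (y (l + m)) < δ) :
    dist (y k) (y l) = 0 := by
  have h_lim : Tendsto (fun m : ℕ => (K : ℝ) ^ m * δ) atTop (𝓝 0) := by
    simpa using (tendsto_pow_atTop_nhds_zero_of_lt_one K.coe_nonneg hK).mul_const δ
  have h_bound : ∃ᶠ m in atTop, dist (y k) (y l) ≤ (K : ℝ) ^ m * δ :=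
    h_freq.mono fun m hm =>
      (dist_le_pow_mul_dist_add hK.le h_step hm).trans (by gcongr)
  exact (ge_of_tendsto_of_frequently h_lim h_bound).antisymm dist_nonneg

end PseudoMetricSpace

theorem backward_orbit_not_injective_of_contracting_general
    {X : Type*} [MetricSpace X] {f : X → X} {y : ℕ → X} {K : ℝ≥0} {δ : ℝ}
    (hy : TotallyBounded (range y)) (hK : K < 1) (hδ : 0 < δ)
    (hback : ∀ k, f (y (k + 1)) = y k)
    (hcontr : ∀ k l, dist (y k) (y l) < δ → dist (f (y k)) (f (y l)) ≤ K * dist (y k) (y l)) :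
    ∃ p > 0, Function.Periodic y p := by
  have h_step (k l : ℕ) (h : dist (y (k + 1)) (y (l + 1)) < δ) :
      dist (y k) (y l) ≤ K * dist (y (k + 1)) (y (l + 1)) := by
    simpa only [hback] using hcontr (k + 1) (l + 1) h
  obtain ⟨p, hp, h_freq⟩ := exists_pos_frequently_dist_add_lt hy hδ
  refine ⟨p, hp, fun k => (dist_eq_zero.1 ?_).symm⟩
  refine dist_eq_zero_of_frequently_dist_add_lt hK h_step ?_
  rw [← map_add_atTop_eq_nat k, frequently_map] at h_freq
  simpa only [add_comm, add_left_comm] using h_freq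

/-- In a compact metric space, a backward orbit along which `f` contracts
distances by a factor `1/2` at scale `δ` cannot consist of pairwise distinct points. -/
theorem backward_orbit_not_injective_of_contracting
    (X : Type*) [MetricSpace X] [CompactSpace X]
    (f : X → X) (δ : ℝ) (hδ : 0 < δ)
    (y : ℕ → X) (hback : ∀ k : ℕ, f (y (k + 1)) = y k)
    (hcontr : ∀ k : ℕ, ∀ z : X, dist (y k) z < δ →
      dist (f (y k)) (f z) ≤ dist (y k) z / 2) :
    ∃ k l : ℕ, k ≠ l ∧ y k = y l := by
  obtain ⟨p, hp, h_per⟩ := backward_orbit_not_injective_of_contracting_general (K := 2⁻¹)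
    (isCompact_univ.totallyBounded.subset (subset_univ _)) (by norm_num) hδ hback
    fun k l h => by simpa [div_eq_inv_mul] using hcontr k (y l) h
  exact ⟨p, 0, hp.ne', h_per.eq⟩
end

section
/- Let (X,d) be a compact metric space, let f : X → X be continuous, let x_0 ∈ X and put x_k := f^k(x_0) for k ∈ ℕ. Suppose there exist δ > 0 and k_0 ∈ ℕ such that for every k ≥ k_0 and every y ∈ X with d(y, x_k) ≤ δ one has d(f(y), f(x_k)) ≤ d(y, x_k)/2. If there exist integers l ≥ k_0 and p ≥ 1 with d(x_{l+p}, x_l) ≤ δ, then d(x_{l+(j+1)p}, x_{l+jp}) ≤ δ/2^{jp} for all j ≥ 0, the sequence (x_{l+jp})_{j∈ℕ} is a Cauchy sequence, and it converges to a point ξ ∈ X satisfying f^p(ξ) = ξ. -/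
open Filter Function

/-!
Since `f` contracts along the tail of the orbit, `g = f^p` contracts with factor `1 / 2 ^ p` at
every point of the `g`-orbit of `x_l`, and the whole statement is about the Picard iteration of `g`
started at `x_l`: successive distances decay geometrically, so the iterates converge. The
contraction bound at the points of the orbit passes to the limit `ξ`, which makes `g` continuous
at `ξ`, and a limit of iterates at which the map is continuous is a fixed point.
-/

open Topology

/-- `f` contracts distances to the point `x` by the factor `c` on the closed ball of radius `δ`
around `x`. One of the two points compared is always the centre `x`, so this is weaker than `f`
being `c`-Lipschitz on that ball. -/
def ContractsAtScale {X : Type*} [PseudoMetricSpace X] (f : X → X) (c δ : ℝ) (x : X) : Prop :=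
  ∀ y, dist y x ≤ δ → dist (f y) (f x) ≤ c * dist y x

namespace ContractsAtScale

section PseudoMetricSpace

variable {X : Type*} [PseudoMetricSpace X] {f : X → X} {c δ : ℝ} {x : X}

theorem iterate (hc₀ : 0 ≤ c) (hc₁ : c ≤ 1) (h : ∀ k, ContractsAtScale f c δ (f^[k] x)) (n : ℕ) :
    ContractsAtScale f^[n] (c ^ n) δ x := by
  intro y hy
  induction n with
  | zero => simp
  | succ n ih =>
    have hle : dist (f^[n] y) (f^[n] x) ≤ δ :=
      (ih.trans (mul_le_of_le_one_left dist_nonneg (pow_le_one₀ hc₀ hc₁))).trans hy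
    rw [iterate_succ_apply', iterate_succ_apply']
    calc dist (f (f^[n] y)) (f (f^[n] x))
        ≤ c * dist (f^[n] y) (f^[n] x) := h n _ hle
      _ ≤ c * (c ^ n * dist y x) := by gcongr
      _ = c ^ (n + 1) * dist y x := by ring

theorem dist_iterate_succ_le (hc₀ : 0 ≤ c) (hc₁ : c ≤ 1)
    (h : ∀ k, ContractsAtScale f c δ (f^[k] x)) (hx : dist (f x) x ≤ δ) (n : ℕ) :
    dist (f^[n + 1] x) (f^[n] x) ≤ δ * c ^ n :=
  calc dist (f^[n + 1] x) (f^[n] x)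
      ≤ c ^ n * dist (f x) x := iterate hc₀ hc₁ h n (f x) hx
    _ ≤ c ^ n * δ := by gcongr
    _ = δ * c ^ n := mul_comm _ _

theorem cauchySeq_iterate (hc₀ : 0 ≤ c) (hc₁ : c < 1)
    (h : ∀ k, ContractsAtScale f c δ (f^[k] x)) (hx : dist (f x) x ≤ δ) :
    CauchySeq fun n => f^[n] x :=
  cauchySeq_of_le_geometric c δ hc₁ fun n =>
    (dist_comm _ _).trans_le (dist_iterate_succ_le hc₀ hc₁.le h hx n)

theorem continuousAt (h : ContractsAtScale f c δ x) (hδ : 0 < δ) : ContinuousAt f x :=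
  continuousAt_of_locally_lipschitz hδ c fun y hy => h y hy.le

theorem of_tendsto {ι : Type*} {F : Filter ι} [F.NeBot] {u : ι → X} {r : ℝ}
    (hu : Tendsto u F (𝓝 x)) (h : ∀ i, ContractsAtScale f c δ (u i)) (hr : r < δ) :
    ContractsAtScale f c r x := by
  intro y hy
  have hdist (z : X) : Tendsto (fun i => dist z (u i)) F (𝓝 (dist z x)) :=
    tendsto_const_nhds.dist hu
  have hlim : Tendsto (fun i => c * dist y (u i) + c * dist x (u i)) F (𝓝 (c * dist y x)) := by
    simpa using ((hdist y).const_mul c).add ((hdist x).const_mul c)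
  have hyu : ∀ᶠ i in F, dist y (u i) < δ := (hdist y).eventually_lt_const (hy.trans_lt hr)
  have hxu : ∀ᶠ i in F, dist x (u i) < δ :=
    (hdist x).eventually_lt_const (by simpa using (dist_nonneg.trans hy).trans_lt hr)
  refine ge_of_tendsto hlim ?_
  filter_upwards [hyu, hxu] with i hyi hxi
  exact (dist_triangle_right _ _ _).trans (add_le_add (h i y hyi.le) (h i x hxi.le))

end PseudoMetricSpace

theorem isFixedPt_of_tendsto_iterate {X : Type*} [MetricSpace X] {f : X → X} {c δ : ℝ} {x ξ : X}
    (hδ : 0 < δ) (h : ∀ k, ContractsAtScale f c δ (f^[k] x))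
    (hξ : Tendsto (fun n => f^[n] x) atTop (𝓝 ξ)) : IsFixedPt f ξ :=
  _root_.isFixedPt_of_tendsto_iterate hξ <|
    (of_tendsto hξ h (half_lt_self hδ)).continuousAt (half_pos hδ)

end ContractsAtScale

theorem iterate_add_mul_apply {X : Type*} (f : X → X) (l j p : ℕ) (x : X) :
    f^[l + j * p] x = (f^[p])^[j] (f^[l] x) := by
  rw [add_comm, iterate_add_apply, mul_comm, iterate_mul]

theorem orbit_subsequence_cauchy_tendsto_periodic_general
    {X : Type*} [MetricSpace X] [CompleteSpace X] {f : X → X} {x₀ : X} {c δ : ℝ}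
    (hc₀ : 0 ≤ c) (hc₁ : c < 1) (hδ : 0 < δ) {l p : ℕ}
    (hcontr : ∀ k, l ≤ k → ContractsAtScale f c δ (f^[k] x₀)) (hp : 1 ≤ p)
    (hclose : dist (f^[l + p] x₀) (f^[l] x₀) ≤ δ) :
    (∀ j : ℕ, dist (f^[l + (j + 1) * p] x₀) (f^[l + j * p] x₀) ≤ δ * c ^ (j * p)) ∧
    CauchySeq (fun j : ℕ => f^[l + j * p] x₀) ∧
    ∃ ξ : X, Tendsto (fun j : ℕ => f^[l + j * p] x₀) atTop (𝓝 ξ) ∧ f^[p] ξ = ξ := by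
  have hg₀ : 0 ≤ c ^ p := pow_nonneg hc₀ p
  have hg₁ : c ^ p < 1 := pow_lt_one₀ hc₀ hc₁ (Nat.one_le_iff_ne_zero.mp hp)
  have hg (j : ℕ) : ContractsAtScale f^[p] (c ^ p) δ ((f^[p])^[j] (f^[l] x₀)) := by
    rw [← iterate_add_mul_apply]
    refine .iterate hc₀ hc₁.le (fun k => ?_) p
    rw [← iterate_add_apply]
    exact hcontr _ (by lia)
  have hx : dist (f^[p] (f^[l] x₀)) (f^[l] x₀) ≤ δ := by
    rwa [← iterate_add_apply, add_comm]
  have hcauchy := ContractsAtScale.cauchySeq_iterate hg₀ hg₁ hg hx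
  obtain ⟨ξ, hξ⟩ := cauchySeq_tendsto_of_complete hcauchy
  simp only [iterate_add_mul_apply, pow_mul']
  exact ⟨ContractsAtScale.dist_iterate_succ_le hg₀ hg₁.le hg hx, hcauchy, ξ, hξ,
    ContractsAtScale.isFixedPt_of_tendsto_iterate hδ hg hξ⟩

/-- If `f` contracts by a factor `1/2` at scale `δ` along the tail of the
forward orbit of `x₀`, and two orbit points `x_{l+p}` and `x_l` (with `l ≥ k₀`, `p ≥ 1`) are
within distance `δ`, then the distances `d(x_{l+(j+1)p}, x_{l+jp})` decay like `δ/2^{jp}`,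
the sequence `(x_{l+jp})_j` is Cauchy, and it converges to a periodic point `ξ` with
`f^p(ξ) = ξ`. -/
theorem orbit_subsequence_cauchy_tendsto_periodic
    (X : Type*) [MetricSpace X] [CompactSpace X]
    (f : X → X) (hfc : Continuous f) (x₀ : X)
    (δ : ℝ) (hδ : 0 < δ) (k₀ : ℕ)
    (hcontr : ∀ k : ℕ, k₀ ≤ k → ∀ y : X, dist y (f^[k] x₀) ≤ δ →
      dist (f y) (f (f^[k] x₀)) ≤ dist y (f^[k] x₀) / 2)
    (l p : ℕ) (hl : k₀ ≤ l) (hp : 1 ≤ p)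
    (hclose : dist (f^[l + p] x₀) (f^[l] x₀) ≤ δ) :
    (∀ j : ℕ, dist (f^[l + (j + 1) * p] x₀) (f^[l + j * p] x₀) ≤ δ / 2 ^ (j * p)) ∧
    CauchySeq (fun j : ℕ => f^[l + j * p] x₀) ∧
    ∃ ξ : X, Filter.Tendsto (fun j : ℕ => f^[l + j * p] x₀) Filter.atTop (nhds ξ) ∧
      f^[p] ξ = ξ := by
  simpa only [inv_pow, ← div_eq_mul_inv] using
    orbit_subsequence_cauchy_tendsto_periodic_general (c := 2⁻¹) (by norm_num) (by norm_num) hδ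
      (fun k hk y hy => (hcontr k (hl.trans hk) y hy).trans_eq (div_eq_inv_mul _ _)) hp hclose
end

section
/- Let X be a set, let f : X → X be a surjective map, and let x ∈ X. Define the backward orbit O^-(x) := ⋃_{j≥1} f^{-j}(x), where f^{-j}(x) denotes the preimage of x under the j-th iterate of f. If O^-(x) is a finite set, then x ∈ O^-(x); that is, there exists p ≥ 1 with f^p(x) = x. Moreover, for this p one has f^{-p}(x) = {x}, and every point y ∈ O^-(x) has exactly one preimage under f. -/
open Function Set

/-!
Taking preimages maps the backward orbit `B` of `x` into itself, and a subset of the range has at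
least as many preimages as elements. For `B` finite, counting gives `f ⁻¹' B = B`, so `f` permutes
`B`. As `B` contains the preimages of `x`, it contains `x`.
-/

section

variable {α : Type*} {f : α → α} {s : Set α}

theorem preimage_eq_self_of_finite (hs : s.Finite) (hback : f ⁻¹' s ⊆ s) (hrange : s ⊆ range f) :
    f ⁻¹' s = s := by
  have hcard : s.ncard ≤ (f ⁻¹' s).ncard := by
    calc s.ncard = (f '' (f ⁻¹' s)).ncard := by rw [image_preimage_eq_of_subset hrange]
      _ ≤ (f ⁻¹' s).ncard := ncard_image_le (hs.subset hback)
  exact eq_of_subset_of_ncard_le hback hcard hs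

theorem bijOn_of_finite_of_preimage_subset (hs : s.Finite) (hback : f ⁻¹' s ⊆ s)
    (hrange : s ⊆ range f) : BijOn f s s := by
  have hpre : f ⁻¹' s = s := preimage_eq_self_of_finite hs hback hrange
  have hmaps : MapsTo f s s := hpre.ge
  have himage : f '' s = s := by
    simpa only [hpre] using image_preimage_eq_of_subset hrange
  exact (hs.surjOn_iff_bijOn_of_mapsTo hmaps).1 himage.ge

theorem existsUnique_preimage_of_bijOn {β : Type*} {g : α → β} {t : Set β} (hg : BijOn g s t)
    (hback : g ⁻¹' t ⊆ s) {y : β} (hy : y ∈ t) : ∃! z, g z = y := by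
  obtain ⟨z, hz, rfl⟩ := hg.surjOn hy
  refine ⟨z, rfl, fun w hw => ?_⟩
  have hwt : g w ∈ t := hw.symm ▸ hy
  exact hg.injOn (hback hwt) hz hw

end

/-- The backward orbit `O⁻(x)`: the points that reach `x` after at least one step of `f`. The point
`x` itself belongs to it only if it is periodic. -/
def backwardOrbit {α : Type*} (f : α → α) (x : α) : Set α :=
  ⋃ j : ℕ, ⋃ _ : 1 ≤ j, f^[j] ⁻¹' {x}

namespace backwardOrbit

variable {α : Type*} {f : α → α} {x y : α} {p : ℕ}

theorem mem_iff : y ∈ backwardOrbit f x ↔ ∃ j, 1 ≤ j ∧ f^[j] y = x := by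
  simp [backwardOrbit]

theorem preimage_subset : f ⁻¹' backwardOrbit f x ⊆ backwardOrbit f x := by
  intro y hy
  obtain ⟨j, -, hj⟩ := mem_iff.1 hy
  exact mem_iff.2 ⟨j + 1, Nat.le_add_left 1 j, hj⟩

theorem self_mem (hmaps : MapsTo f (backwardOrbit f x) (backwardOrbit f x)) (hx : x ∈ range f) :
    x ∈ backwardOrbit f x := by
  obtain ⟨z, rfl⟩ := hx
  exact hmaps (mem_iff.2 ⟨1, le_rfl, rfl⟩)

theorem mapsTo_of_self_mem (hx : x ∈ backwardOrbit f x) :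
    MapsTo f (backwardOrbit f x) (backwardOrbit f x) := by
  intro y hy
  obtain ⟨j, hj, hjy⟩ := mem_iff.1 hy
  obtain ⟨i, rfl⟩ := Nat.exists_eq_add_of_le' hj
  obtain rfl | hi := i.eq_zero_or_pos
  · have hyx : f y = x := hjy
    rwa [hyx]
  · exact mem_iff.2 ⟨i, hi, hjy⟩

theorem iterate_preimage_singleton_eq (hinj : InjOn f (backwardOrbit f x)) (hp : 1 ≤ p)
    (hpx : f^[p] x = x) : f^[p] ⁻¹' {x} = {x} := by
  have hx : x ∈ backwardOrbit f x := mem_iff.2 ⟨p, hp, hpx⟩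
  refine Subset.antisymm (fun y hy => ?_) (singleton_subset_iff.2 hpx)
  have hyx : f^[p] y = f^[p] x := hy.trans hpx.symm
  exact hinj.iterate (mapsTo_of_self_mem hx) p (mem_iff.2 ⟨p, hp, hy⟩) hx hyx

end backwardOrbit

/-- If `f : X → X` is surjective and the backward orbit
`O⁻(x) = ⋃_{j ≥ 1} f^{-j}(x)` of a point `x` is finite, then `x` is periodic
(`x ∈ O⁻(x)`, i.e. `f^p(x) = x` for some `p ≥ 1`), for this `p` one has
`f^{-p}(x) = {x}`, and every point of `O⁻(x)` has exactly one preimage under `f`. -/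
theorem periodic_of_finite_backward_orbit
    (X : Type*) (f : X → X) (hfs : Function.Surjective f) (x : X)
    (hfin : (⋃ j : ℕ, ⋃ _ : 1 ≤ j, f^[j] ⁻¹' {x}).Finite) :
    (∃ p : ℕ, 1 ≤ p ∧ f^[p] x = x ∧ f^[p] ⁻¹' {x} = {x}) ∧
    ∀ y ∈ ⋃ j : ℕ, ⋃ _ : 1 ≤ j, f^[j] ⁻¹' {x}, ∃! z : X, f z = y := by
  have hbij : BijOn f (backwardOrbit f x) (backwardOrbit f x) :=
    bijOn_of_finite_of_preimage_subset hfin backwardOrbit.preimage_subset fun y _ => hfs y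
  obtain ⟨p, hp, hpx⟩ := backwardOrbit.mem_iff.1 (backwardOrbit.self_mem hbij.mapsTo (hfs x))
  refine ⟨⟨p, hp, hpx, ?_⟩, fun y hy => ?_⟩
  · exact backwardOrbit.iterate_preimage_singleton_eq hbij.injOn hp hpx
  · exact existsUnique_preimage_of_bijOn hbij backwardOrbit.preimage_subset hy
end
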